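/- arXiv:math/9411210 — 2 statements merged into one kernel-verified Lean document; each statement's English description precedes it below -/
import Mathlib

section
/- Let m ≥ 2 and let N be a symmetric lattice norm on ℝ^m (functions Fin m → ℝ) that is not proportional to the Euclidean norm (equivalently, the m-dimensional space (ℝ^m, N) is not isometric to ℓ₂^m). Let H be an infinite-dimensional separable real Hilbert space and equip X = (Fin m → H) with the norm ‖f‖ = N(fun i => ‖f i‖_H). Then every Flinn element u = (u_i)_i of X is supported on a single coordinate: there exists i₀ such that u i = 0 for all i ≠ i₀. -/
open scoped RealInnerProductSpace

/-- `N` is a norm on `Fin m → ℝ`. -/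
def IsNorm {m : ℕ} (N : (Fin m → ℝ) → ℝ) : Prop :=
  (∀ x, N x = 0 ↔ x = 0) ∧
  (∀ (c : ℝ) (x : Fin m → ℝ), N (c • x) = |c| * N x) ∧
  (∀ x y, N (x + y) ≤ N x + N y)

/-- `N` is a lattice norm: it depends only on coordinatewise absolute values, monotonically. -/
def IsLatticeNorm {m : ℕ} (N : (Fin m → ℝ) → ℝ) : Prop :=
  IsNorm N ∧ (∀ x, N x = N fun i => |x i|) ∧
  ∀ x y : Fin m → ℝ, (∀ i, |x i| ≤ |y i|) → N x ≤ N y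

/-- `N` is a symmetric lattice norm: a lattice norm invariant under permutations. -/
def IsSymmLatticeNorm {m : ℕ} (N : (Fin m → ℝ) → ℝ) : Prop :=
  IsLatticeNorm N ∧ ∀ (π : Equiv.Perm (Fin m)) (x : Fin m → ℝ), N (x ∘ π) = N x

/-- The norm on `Fin m → H` induced by the norm `N`:  `‖f‖ = N (fun i => ‖f i‖)`. -/
noncomputable def XNorm {m : ℕ} (N : (Fin m → ℝ) → ℝ) {H : Type*} [NormedAddCommGroup H]
    (f : Fin m → H) : ℝ := N fun i => ‖f i‖

/-- The dual norm of the norm `XNorm N` on `Fin m → H`, where a vector `g : Fin m → H`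
is identified with the functional `f ↦ ∑ i, ⟪g i, f i⟫`. -/
noncomputable def XDualNorm {m : ℕ} (N : (Fin m → ℝ) → ℝ) {H : Type*} [NormedAddCommGroup H]
    [InnerProductSpace ℝ H] (g : Fin m → H) : ℝ :=
  sSup {s : ℝ | ∃ f : Fin m → H, XNorm N f ≤ 1 ∧ s = ∑ i, ⟪g i, f i⟫}

/-- `(u, g)` is a Flinn pair in `(Fin m → H, XNorm N)`, where every continuous linear
functional is represented by a vector `xs : Fin m → H` via `x ↦ ∑ i, ⟪xs i, x i⟫`. -/
def IsVFlinnPair {m : ℕ} (N : (Fin m → ℝ) → ℝ) {H : Type*} [NormedAddCommGroup H]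
    [InnerProductSpace ℝ H] (u g : Fin m → H) : Prop :=
  g ≠ 0 ∧ ∀ x xs : Fin m → H,
    (∑ i, ⟪xs i, x i⟫) = XNorm N x * XDualNorm N xs →
    0 ≤ (∑ i, ⟪g i, x i⟫) * (∑ i, ⟪xs i, u i⟫)

/-- `u` is a Flinn element of `(Fin m → H, XNorm N)`. -/
def IsVFlinn {m : ℕ} (N : (Fin m → ℝ) → ℝ) {H : Type*} [NormedAddCommGroup H]
    [InnerProductSpace ℝ H] (u : Fin m → H) : Prop :=
  ∃ g, IsVFlinnPair N u g


/-- `(a, b)` is a nonnegative norming pair for `N`. -/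
def NPair {m : ℕ} (N : (Fin m → ℝ) → ℝ) (a b : Fin m → ℝ) : Prop :=
  (∀ i, 0 ≤ a i) ∧ (∀ i, 0 ≤ b i) ∧ a ≠ 0 ∧
  ∀ y : Fin m → ℝ, (∀ i, 0 ≤ y i) → (∑ i, b i * y i) * N a ≤ N y * ∑ i, b i * a i

lemma N_nonneg {m : ℕ} {N : (Fin m → ℝ) → ℝ} (hN : IsLatticeNorm N) (x : Fin m → ℝ) :
    0 ≤ N x := by
  have h0 : N 0 = 0 := (hN.1.1 0).2 rfl
  have := hN.2.2 0 x (by intro i; simp)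
  linarith

lemma N_pos {m : ℕ} {N : (Fin m → ℝ) → ℝ} (hN : IsLatticeNorm N) {x : Fin m → ℝ}
    (hx : x ≠ 0) : 0 < N x :=
  lt_of_le_of_ne (N_nonneg hN x) (fun h => hx ((hN.1.1 x).1 h.symm))

lemma norming {m : ℕ} {N : (Fin m → ℝ) → ℝ} (hN : IsLatticeNorm N)
    {H : Type*} [NormedAddCommGroup H] [InnerProductSpace ℝ H]
    {a b : Fin m → ℝ} (hab : NPair N a b) (h : Fin m → H) (hh : ∀ i, ‖h i‖ = 1) :
    (∑ i, ⟪(b i • h i : H), a i • h i⟫) =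
      XNorm N (fun i => a i • h i) * XDualNorm N (fun i => b i • h i) := by
  obtain ⟨ha, hb, ha0, hy⟩ := hab
  have hNa := N_pos hN ha0
  have e1 : ∀ c : ℝ, (∑ i, ⟪(b i • h i : H), c • a i • h i⟫) = c * ∑ i, b i * a i := by
    intro c
    rw [Finset.mul_sum]
    refine Finset.sum_congr rfl fun i _ => ?_
    rw [real_inner_smul_left, real_inner_smul_right, real_inner_smul_right,
      real_inner_self_eq_norm_sq, hh]
    ring
  have e2 : ∀ c : ℝ, 0 ≤ c → XNorm N (fun i => c • a i • h i) = c * N a := by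
    intro c hc
    unfold XNorm
    have : (fun i => ‖c • a i • h i‖) = c • a := by
      funext i
      simp [norm_smul, hh, abs_of_nonneg hc, abs_of_nonneg (ha i)]
    rw [this, hN.1.2.1, abs_of_nonneg hc]
  have e3 : XDualNorm N (fun i => b i • h i) = (N a)⁻¹ * ∑ i, b i * a i := by
    unfold XDualNorm
    apply IsGreatest.csSup_eq
    constructor
    · refine ⟨fun i => (N a)⁻¹ • a i • h i, ?_, ?_⟩
      · rw [e2 _ (inv_nonneg.2 hNa.le), inv_mul_cancel₀ hNa.ne']
      · rw [e1]
    · rintro s ⟨f, hf, rfl⟩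
      have h1 : (∑ i, ⟪(b i • h i : H), f i⟫) ≤ ∑ i, b i * ‖f i‖ := by
        refine Finset.sum_le_sum fun i _ => ?_
        rw [real_inner_smul_left]
        refine mul_le_mul_of_nonneg_left ?_ (hb i)
        have := real_inner_le_norm (h i) (f i)
        rwa [hh, one_mul] at this
      have h2 := hy (fun i => ‖f i‖) (fun i => norm_nonneg _)
      have h3 : 0 ≤ ∑ i, b i * a i := Finset.sum_nonneg fun i _ => mul_nonneg (hb i) (ha i)
      have h4 : N (fun i => ‖f i‖) * ∑ i, b i * a i ≤ ∑ i, b i * a i :=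
        mul_le_of_le_one_left h3 hf
      rw [inv_mul_eq_div, le_div_iff₀ hNa]
      have := mul_le_mul_of_nonneg_right h1 hNa.le
      linarith
  have e4 := e1 1
  have e5 := e2 1 zero_le_one
  simp only [one_smul, one_mul] at e4 e5
  rw [e4, e5, e3, mul_inv_cancel_left₀ hNa.ne']

lemma NPair_single {m : ℕ} {N : (Fin m → ℝ) → ℝ} (hN : IsLatticeNorm N) (i : Fin m) :
    NPair N (Pi.single i 1) (Pi.single i 1) := by
  have hs : ∀ j, 0 ≤ (Pi.single i (1:ℝ) : Fin m → ℝ) j := by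
    intro j
    by_cases h : j = i
    · subst h; simp
    · simp [h]
  refine ⟨hs, hs, by simp, ?_⟩
  intro y hy
  have h1 : ∀ z : Fin m → ℝ, ∑ j, (Pi.single i (1:ℝ) : Fin m → ℝ) j * z j = z i := by
    intro z
    simp [Pi.single_apply]
  rw [h1, h1, Pi.single_eq_same, mul_one]
  have h2 := hN.1.2.1 (y i) (Pi.single i 1)
  rw [abs_of_nonneg (hy i)] at h2
  rw [← h2]
  apply hN.2.2
  intro j
  by_cases h : j = i
  · subst h; simp
  · simp [h]

lemma N_sum_le {m : ℕ} {N : (Fin m → ℝ) → ℝ} (hN : IsLatticeNorm N) {ι : Type*}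
    (s : Finset ι) (f : ι → Fin m → ℝ) : N (∑ k ∈ s, f k) ≤ ∑ k ∈ s, N (f k) := by
  classical
  induction s using Finset.induction_on with
  | empty => simp [(hN.1.1 0).2 rfl]
  | insert a s ha ih =>
    rw [Finset.sum_insert ha, Finset.sum_insert ha]
    have := hN.1.2.2 (f a) (∑ k ∈ s, f k)
    linarith

lemma NPair_one {m : ℕ} (hm : 2 ≤ m) {N : (Fin m → ℝ) → ℝ} (hN : IsSymmLatticeNorm N) :
    NPair N (fun _ => 1) (fun _ => 1) := by
  have : NeZero m := ⟨by omega⟩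
  refine ⟨fun _ => zero_le_one, fun _ => zero_le_one, ?_, ?_⟩
  · intro h
    have := congrFun h 0
    simp at this
  · intro y hy
    have h1 := N_sum_le hN.1 Finset.univ (fun k : Fin m => y ∘ (Equiv.addRight k))
    have h2 : (∑ k : Fin m, y ∘ (Equiv.addRight k)) = (∑ i, y i) • (fun _ => (1:ℝ)) := by
      funext i
      simp only [Finset.sum_apply, Function.comp, Equiv.coe_addRight, Pi.smul_apply, smul_eq_mul,
        mul_one]
      exact Equiv.sum_comp (Equiv.addLeft i) y
    rw [h2, hN.1.1.2.1, abs_of_nonneg (Finset.sum_nonneg fun i _ => hy i)] at h1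
    simp only [hN.2] at h1
    simp only [one_mul, mul_one]
    refine h1.trans (le_of_eq ?_)
    simp [mul_comm]

lemma NPair_perm {m : ℕ} {N : (Fin m → ℝ) → ℝ} (hN : IsSymmLatticeNorm N)
    {a b : Fin m → ℝ} (hab : NPair N a b) (π : Equiv.Perm (Fin m)) :
    NPair N (a ∘ π) (b ∘ π) := by
  obtain ⟨ha, hb, ha0, hy⟩ := hab
  refine ⟨fun i => ha _, fun i => hb _, ?_, ?_⟩
  · intro h
    apply ha0
    funext i
    have := congrFun h (π.symm i)
    simpa using this
  · intro y hy0
    have := hy (y ∘ π.symm) (fun i => hy0 _)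
    rw [hN.2] at this ⊢
    have e1 : ∑ i, (b ∘ π) i * y i = ∑ i, b i * (y ∘ π.symm) i := by
      rw [← Equiv.sum_comp π (fun i => b i * (y ∘ π.symm) i)]
      simp
    have e2 : ∑ i, (b ∘ π) i * (a ∘ π) i = ∑ i, b i * a i :=
      Equiv.sum_comp π (fun i => b i * a i)
    rw [e1, e2]
    exact this

lemma exists_NPair {m : ℕ} {N : (Fin m → ℝ) → ℝ} (hN : IsLatticeNorm N)
    (a : Fin m → ℝ) (ha : ∀ i, 0 ≤ a i) (ha0 : a ≠ 0) :
    ∃ b, NPair N a b ∧ 0 < ∑ i, b i * a i := by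
  have hNa := N_pos hN ha0
  obtain ⟨g, hg1, hg2⟩ := exists_extension_of_le_sublinear
    (LinearPMap.mkSpanSingleton (K := ℝ) a (N a) ha0) N
    (by
      intro c hc x
      rw [hN.1.2.1, abs_of_pos hc])
    (by intro x y; exact hN.1.2.2 x y)
    (by
      rintro ⟨x, hx⟩
      obtain ⟨c, rfl⟩ := Submodule.mem_span_singleton.1 hx
      have h1 := LinearPMap.mkSpanSingleton'_apply (σ := RingHom.id ℝ) a (N a)
        (fun c hc => (smul_eq_zero.1 hc).elim (fun hc => by simp [hc]) fun h => absurd h ha0) c hx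
      refine (le_of_eq h1).trans ?_
      show c * N a ≤ N (c • a)
      rw [hN.1.2.1]
      exact mul_le_mul_of_nonneg_right (le_abs_self c) hNa.le)
  have hga : g a = N a := by
    have := hg1 ⟨a, Submodule.mem_span_singleton_self a⟩
    rw [this]
    exact LinearPMap.mkSpanSingleton_apply ℝ ℝ ha0 (N a)
  have hgx : ∀ x : Fin m → ℝ, g x = ∑ i, x i * g (Pi.single i 1) := by
    intro x
    conv_lhs => rw [pi_eq_sum_univ' x]
    simp [map_sum]
  have hba : N a ≤ ∑ i, |g (Pi.single i 1)| * a i := by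
    rw [← hga, hgx a]
    refine Finset.sum_le_sum fun i _ => ?_
    rw [mul_comm]
    exact mul_le_mul_of_nonneg_right (le_abs_self _) (ha i)
  refine ⟨fun i => |g (Pi.single i 1)|, ⟨ha, fun i => abs_nonneg _, ha0, ?_⟩, by linarith⟩
  intro y hy
  have h1 : ∑ i, |g (Pi.single i 1)| * y i ≤ N y := by
    have h2 := hg2 (fun i => SignType.sign (g (Pi.single i 1)) * y i)
    rw [hgx] at h2
    have h3 : ∑ i, |g (Pi.single i 1)| * y i =
        ∑ i, (SignType.sign (g (Pi.single i 1)) * y i : ℝ) * g (Pi.single i 1) := by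
      refine Finset.sum_congr rfl fun i _ => ?_
      rw [← sign_mul_self]
      ring
    rw [h3]
    refine h2.trans (hN.2.2 _ _ ?_)
    intro i
    rw [abs_mul]
    refine mul_le_of_le_one_left (abs_nonneg _) ?_
    rcases lt_trichotomy (g (Pi.single i 1)) 0 with h | h | h
    · simp [sign_neg h]
    · simp [h]
    · simp [sign_pos h]
  exact mul_le_mul h1 hba hNa.le (N_nonneg hN y)

lemma const_of_quad (q : ℝ → ℝ) (C : ℝ)
    (h : ∀ s ∈ Set.Icc (0:ℝ) 1, ∀ t ∈ Set.Icc (0:ℝ) 1, q s - q t ≤ C * (s - t) ^ 2) :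
    q 0 = q 1 := by
  have key : ∀ n : ℕ, 0 < n → ∀ k : ℕ, k ≤ n →
      |q ((k:ℝ) / n) - q 0| ≤ k * (C / (n:ℝ) ^ 2) := by
    intro n hn k
    have hn' : (0:ℝ) < n := by exact_mod_cast hn
    induction k with
    | zero => intro _; simp
    | succ k ih =>
      intro hk
      have ih' := ih (by omega)
      have hk' : ((k:ℝ) + 1) ≤ n := by exact_mod_cast hk
      have m1 : (k:ℝ) / n ∈ Set.Icc (0:ℝ) 1 :=
        ⟨by positivity, by rw [div_le_one hn']; linarith⟩
      have m2 : ((k:ℝ) + 1) / n ∈ Set.Icc (0:ℝ) 1 :=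
        ⟨by positivity, by rw [div_le_one hn']; linarith⟩
      have h1 := h _ m1 _ m2
      have h2 := h _ m2 _ m1
      have e1 : C * ((k:ℝ) / n - ((k:ℝ) + 1) / n) ^ 2 = C / (n:ℝ) ^ 2 := by field_simp; ring
      have e2 : C * (((k:ℝ) + 1) / n - (k:ℝ) / n) ^ 2 = C / (n:ℝ) ^ 2 := by field_simp; ring
      rw [e1] at h1
      rw [e2] at h2
      push_cast
      rw [abs_le] at ih' ⊢
      constructor <;> linarith
  have key2 : ∀ n : ℕ, 0 < n → |q 1 - q 0| * n ≤ C := by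
    intro n hn
    have hn' : (0:ℝ) < n := by exact_mod_cast hn
    have := key n hn n le_rfl
    rw [div_self hn'.ne'] at this
    have e : (n:ℝ) * (C / (n:ℝ) ^ 2) = C / n := by field_simp
    rwa [e, le_div_iff₀ hn'] at this
  by_contra hne
  have hpos : 0 < |q 1 - q 0| := abs_pos.2 (sub_ne_zero.2 (Ne.symm hne))
  obtain ⟨n, hn⟩ := exists_nat_gt (C / |q 1 - q 0|)
  rw [div_lt_iff₀ hpos] at hn
  have := key2 (n+1) (by omega)
  push_cast at this
  nlinarith

lemma euclid_const {m : ℕ} {N : (Fin m → ℝ) → ℝ} (hN : IsLatticeNorm N)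
    (hkey : ∀ a y : Fin m → ℝ, (∀ i, 0 ≤ a i) → (∀ i, 0 ≤ y i) → a ≠ 0 →
      (∑ i, a i * y i) * N a ≤ N y * ∑ i, a i * a i)
    (a b : Fin m → ℝ) (ha : ∀ i, 0 ≤ a i) (hb : ∀ i, 0 ≤ b i) (ha0 : a ≠ 0) (hb0 : b ≠ 0) :
    N a ^ 2 / (∑ i, a i * a i) = N b ^ 2 / (∑ i, b i * b i) := by
  have hpos : ∀ x : Fin m → ℝ, x ≠ 0 → 0 < ∑ i, x i * x i := by
    intro x hx
    obtain ⟨i, hi⟩ := Function.ne_iff.1 hx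
    exact Finset.sum_pos' (fun j _ => mul_self_nonneg _)
      ⟨i, Finset.mem_univ _, mul_self_pos.2 hi⟩
  set A := ∑ i, a i * a i with hA
  set B := ∑ i, b i * b i with hB
  set D := ∑ i, a i * b i with hD
  have hA0 : 0 < A := hpos a ha0
  have hB0 : 0 < B := hpos b hb0
  have hD0 : 0 ≤ D := Finset.sum_nonneg fun i _ => mul_nonneg (ha i) (hb i)
  let γ : ℝ → Fin m → ℝ := fun t => (1 - t) • a + t • b
  have hin : ∀ s t, ∑ i, γ s i * γ t i
      = (1-s)*(1-t)*A + ((1-s)*t + s*(1-t))*D + s*t*B := by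
    intro s t
    rw [hA, hB, hD, Finset.mul_sum, Finset.mul_sum, Finset.mul_sum, ← Finset.sum_add_distrib,
      ← Finset.sum_add_distrib]
    refine Finset.sum_congr rfl fun i _ => ?_
    simp only [γ, Pi.add_apply, Pi.smul_apply, smul_eq_mul]
    ring
  have hγ : ∀ t ∈ Set.Icc (0:ℝ) 1, ∀ i, 0 ≤ γ t i := by
    intro t ht i
    simp only [γ, Pi.add_apply, Pi.smul_apply, smul_eq_mul]
    exact add_nonneg (mul_nonneg (by linarith [ht.2]) (ha i)) (mul_nonneg ht.1 (hb i))
  let δ := A * B / (A + B)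
  have hδ : 0 < δ := by positivity
  have hE : ∀ t ∈ Set.Icc (0:ℝ) 1, δ ≤ ∑ i, γ t i * γ t i := by
    intro t ht
    rw [hin]
    have h1 : δ ≤ (1-t)^2*A + t^2*B := by
      rw [div_le_iff₀ (by positivity)]
      nlinarith [sq_nonneg ((1-t)*A - t*B)]
    have h2 : 0 ≤ (1-t)*t*D := mul_nonneg (mul_nonneg (by linarith [ht.2]) ht.1) hD0
    nlinarith
  have hγ0 : ∀ t ∈ Set.Icc (0:ℝ) 1, γ t ≠ 0 := by
    intro t ht h
    have := hE t ht
    rw [h] at this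
    simp at this
    linarith
  have hNγ : ∀ t ∈ Set.Icc (0:ℝ) 1, N (γ t) ≤ N a + N b := by
    intro t ht
    have h1 := hN.1.2.2 ((1-t) • a) (t • b)
    rw [hN.1.2.1, hN.1.2.1, abs_of_nonneg ht.1, abs_of_nonneg (by linarith [ht.2] : 0 ≤ 1 - t)]
      at h1
    have := N_nonneg hN a
    have := N_nonneg hN b
    have := ht.1
    have := ht.2
    show N ((1-t) • a + t • b) ≤ _
    nlinarith
  have hG : 0 ≤ A * B - D ^ 2 := by
    have := Finset.sum_mul_sq_le_sq_mul_sq Finset.univ a b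
    simp only [sq] at this ⊢
    linarith
  have main := const_of_quad (fun t => N (γ t) ^ 2 / ∑ i, γ t i * γ t i)
    ((N a + N b) ^ 2 * (A * B - D ^ 2) / δ ^ 3) (by
      intro s hs t ht
      have k := hkey (γ s) (γ t) (hγ s hs) (hγ t ht) (hγ0 s hs)
      have hEs := hE s hs
      have hEt := hE t ht
      have hI : 0 ≤ ∑ i, γ s i * γ t i :=
        Finset.sum_nonneg fun i _ => mul_nonneg (hγ s hs i) (hγ t ht i)
      have hL : (∑ i, γ s i * γ s i) * (∑ i, γ t i * γ t i) - (∑ i, γ s i * γ t i) ^ 2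
          = (s - t) ^ 2 * (A * B - D ^ 2) := by
        rw [hin, hin, hin]; ring
      have hns := hNγ s hs
      have hf := N_nonneg hN (γ s)
      have hf' := N_nonneg hN (γ t)
      generalize (∑ i, γ s i * γ s i) = Es at *
      generalize (∑ i, γ t i * γ t i) = Et at *
      generalize (∑ i, γ s i * γ t i) = I at *
      generalize N (γ s) = f at *
      generalize N (γ t) = f' at *
      have hEs0 : 0 < Es := by linarith
      have hEt0 : 0 < Et := by linarith
      have k2 : I ^ 2 * f ^ 2 ≤ f' ^ 2 * Es ^ 2 := by
        have := pow_le_pow_left₀ (mul_nonneg hI hf) k 2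
        nlinarith
      have k3 : f ^ 2 / Es - f' ^ 2 / Et ≤ f ^ 2 * ((s - t) ^ 2 * (A * B - D ^ 2)) / (Es ^ 2 * Et) := by
        rw [← hL, div_sub_div _ _ hEs0.ne' hEt0.ne', div_le_div_iff₀ (by positivity) (by positivity)]
        have : 0 ≤ (f' ^ 2 * Es ^ 2 - I ^ 2 * f ^ 2) * (Es * Et) :=
          mul_nonneg (by linarith) (by positivity)
        nlinarith
      refine k3.trans ?_
      have k4 : f ^ 2 * ((s - t) ^ 2 * (A * B - D ^ 2)) / (Es ^ 2 * Et) ≤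
          (N a + N b) ^ 2 * ((s - t) ^ 2 * (A * B - D ^ 2)) / (δ ^ 2 * δ) := by
        gcongr
      refine k4.trans (le_of_eq ?_)
      field_simp)
  simpa [γ, hA, hB] using main

lemma exists_unit_orth {H : Type*} [NormedAddCommGroup H] [InnerProductSpace ℝ H]
    [CompleteSpace H] (hinf : ¬ FiniteDimensional ℝ H) {m : ℕ} (u g : Fin m → H) :
    ∃ w : H, ‖w‖ = 1 ∧ (∀ i, ⟪u i, w⟫ = 0) ∧ ∀ i, ⟪g i, w⟫ = 0 := by
  let S : Submodule ℝ H := Submodule.span ℝ (Set.range u ∪ Set.range g)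
  have : FiniteDimensional ℝ S :=
    FiniteDimensional.span_of_finite ℝ ((Set.finite_range u).union (Set.finite_range g))
  have hS : Sᗮ ≠ ⊥ := by
    intro h
    rw [Submodule.orthogonal_eq_bot_iff] at h
    apply hinf
    have h2 : S.FG := (Submodule.fg_iff_finiteDimensional S).2 inferInstance
    rw [h] at h2
    exact ⟨h2⟩
  obtain ⟨v, hv, hv0⟩ := Submodule.exists_mem_ne_zero_of_ne_bot hS
  have hvn : ‖v‖ ≠ 0 := norm_ne_zero_iff.2 hv0
  refine ⟨‖v‖⁻¹ • v, ?_, ?_, ?_⟩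
  · rw [norm_smul, norm_inv, norm_norm, inv_mul_cancel₀ hvn]
  · intro i
    rw [real_inner_smul_right, (Submodule.mem_orthogonal S v).1 hv (u i)
      (Submodule.subset_span (Or.inl ⟨i, rfl⟩)), mul_zero]
  · intro i
    rw [real_inner_smul_right, (Submodule.mem_orthogonal S v).1 hv (g i)
      (Submodule.subset_span (Or.inr ⟨i, rfl⟩)), mul_zero]

lemma exists_common {H : Type*} [NormedAddCommGroup H] [InnerProductSpace ℝ H]
    (w : H) (hw : ‖w‖ = 1) (u g : H) (hw1 : ⟪u, w⟫ = 0) (hw2 : ⟪g, w⟫ = 0)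
    (h : ∀ x : H, ‖x‖ = 1 → 0 ≤ ⟪g, x⟫ * ⟪u, x⟫) :
    ∀ σ : ℝ, |σ| ≤ 1 → ∃ x : H, ‖x‖ = 1 ∧ ⟪u, x⟫ = σ * ‖u‖ ∧ ⟪g, x⟫ = σ * ‖g‖ := by
  suffices hs : (u = 0 ∧ g = 0) ∨
      ∃ e : H, ‖e‖ = 1 ∧ ⟪u, e⟫ = ‖u‖ ∧ ⟪g, e⟫ = ‖g‖ ∧ ⟪e, w⟫ = 0 by
    intro σ hσ
    rcases hs with ⟨rfl, rfl⟩ | ⟨e, he, h1, h2, h3⟩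
    · exact ⟨w, hw, by simp, by simp⟩
    have hσ2 : 0 ≤ 1 - σ ^ 2 := by
      have := (sq_le_one_iff_abs_le_one σ).2 hσ
      linarith
    refine ⟨σ • e + Real.sqrt (1 - σ ^ 2) • w, ?_, ?_, ?_⟩
    · have : ‖σ • e + Real.sqrt (1 - σ ^ 2) • w‖ ^ 2 = 1 := by
        rw [norm_add_sq_real, real_inner_smul_left, real_inner_smul_right, h3, norm_smul,
          norm_smul, he, hw, Real.norm_eq_abs, Real.norm_eq_abs, mul_one, mul_one, sq_abs, sq_abs,
          Real.sq_sqrt hσ2]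
        ring
      nlinarith [norm_nonneg (σ • e + Real.sqrt (1 - σ ^ 2) • w)]
    · rw [inner_add_right, real_inner_smul_right, real_inner_smul_right, h1, hw1]; ring
    · rw [inner_add_right, real_inner_smul_right, real_inner_smul_right, h2, hw2]; ring
  have hx : ∀ x : H, 0 ≤ ⟪g, x⟫ * ⟪u, x⟫ := by
    intro x
    by_cases hx0 : x = 0
    · simp [hx0]
    have hxn : 0 < ‖x‖ := norm_pos_iff.2 hx0
    have := h (‖x‖⁻¹ • x) (by rw [norm_smul, norm_inv, norm_norm, inv_mul_cancel₀ hxn.ne'])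
    rw [real_inner_smul_right, real_inner_smul_right] at this
    have h2 : ⟪g, x⟫ * ⟪u, x⟫ = ‖x‖ ^ 2 * (‖x‖⁻¹ * ⟪g, x⟫ * (‖x‖⁻¹ * ⟪u, x⟫)) := by
      field_simp
    rw [h2]
    positivity
  have unit : ∀ v : H, v ≠ 0 → ‖‖v‖⁻¹ • v‖ = 1 ∧ ⟪v, ‖v‖⁻¹ • v⟫ = ‖v‖ := by
    intro v hv
    have hvn : ‖v‖ ≠ 0 := norm_ne_zero_iff.2 hv
    refine ⟨by rw [norm_smul, norm_inv, norm_norm, inv_mul_cancel₀ hvn], ?_⟩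
    rw [real_inner_smul_right, real_inner_self_eq_norm_sq]
    field_simp
  by_cases hu : u = 0
  · by_cases hg : g = 0
    · exact Or.inl ⟨hu, hg⟩
    · refine Or.inr ⟨‖g‖⁻¹ • g, (unit g hg).1, by simp [hu], (unit g hg).2, ?_⟩
      rw [real_inner_smul_left, hw2, mul_zero]
  · refine Or.inr ⟨‖u‖⁻¹ • u, (unit u hu).1, (unit u hu).2, ?_, ?_⟩
    · by_cases hg : g = 0
      · simp [hg]
      have hun : 0 < ‖u‖ := norm_pos_iff.2 hu
      have hgn : 0 < ‖g‖ := norm_pos_iff.2 hg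
      have k := hx (‖g‖⁻¹ • g - ‖u‖⁻¹ • u)
      rw [inner_sub_right, inner_sub_right, (unit g hg).2, (unit u hu).2, real_inner_smul_right,
        real_inner_smul_right, real_inner_comm g u] at k
      rw [real_inner_smul_right]
      have h1 : ⟪g, u⟫ = ‖g‖ * ‖u‖ := by
        generalize ⟪g, u⟫ = c at *
        have k' : (‖g‖ - ‖u‖⁻¹ * c) * (‖g‖⁻¹ * c - ‖u‖) = - (‖g‖*‖u‖ - c)^2 / (‖g‖ * ‖u‖) := by
          field_simp
          ring
        rw [k', div_nonneg_iff] at k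
        have : 0 < ‖g‖ * ‖u‖ := by positivity
        rcases k with k | k
        · nlinarith [sq_nonneg (‖g‖*‖u‖ - c)]
        · linarith [k.2]
      rw [h1]
      field_simp
    · rw [real_inner_smul_left, hw1, mul_zero]

lemma prop_of_nonneg (P Q P' Q' : ℝ)
    (h : ∀ σ τ : ℝ, |σ| ≤ 1 → |τ| ≤ 1 → 0 ≤ (P * σ + P' * τ) * (Q * σ + Q' * τ)) :
    P * Q' = P' * Q := by
  have h1 : ∀ x : ℝ, 0 ≤ (P * Q) * (x * x) + (P * Q' + P' * Q) * x + P' * Q' := by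
    intro x
    have hx : 0 < 1 + |x| := by positivity
    have := h (x / (1 + |x|)) (1 / (1 + |x|))
      (by rw [abs_div, abs_of_pos hx, div_le_one hx]; linarith)
      (by rw [abs_div, abs_of_pos hx, div_le_one hx, abs_one]; linarith [abs_nonneg x])
    have e : (P * Q) * (x * x) + (P * Q' + P' * Q) * x + P' * Q' = (1 + |x|) ^ 2 *
      ((P * (x / (1 + |x|)) + P' * (1 / (1 + |x|))) *
        (Q * (x / (1 + |x|)) + Q' * (1 / (1 + |x|)))) := by
      field_simp
      ring
    rw [e]
    positivity
  have h2 := discrim_le_zero h1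
  unfold discrim at h2
  have h3 : (P * Q' - P' * Q) ^ 2 = 0 := by nlinarith [sq_nonneg (P * Q' - P' * Q)]
  have := pow_eq_zero_iff (two_ne_zero) |>.1 h3
  linarith

lemma flinn_prop {m : ℕ} {N : (Fin m → ℝ) → ℝ} (hN : IsLatticeNorm N)
    {H : Type*} [NormedAddCommGroup H] [InnerProductSpace ℝ H] [CompleteSpace H]
    (hinf : ¬ FiniteDimensional ℝ H) (u g : Fin m → H) (hug : IsVFlinnPair N u g)
    {a b : Fin m → ℝ} (hab : NPair N a b) {i j : Fin m} (hij : i ≠ j) :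
    (a i * ‖g i‖) * (b j * ‖u j‖) = (a j * ‖g j‖) * (b i * ‖u i‖) := by
  have F : ∀ {a b : Fin m → ℝ}, NPair N a b → ∀ h : Fin m → H, (∀ i, ‖h i‖ = 1) →
      0 ≤ (∑ i, a i * ⟪g i, h i⟫) * (∑ i, b i * ⟪u i, h i⟫) := by
    intro a b hab h hh
    have := hug.2 _ _ (norming hN hab h hh)
    simp only [real_inner_smul_left, real_inner_smul_right] at this
    simpa only [real_inner_comm] using this
  obtain ⟨w, hw, hwu, hwg⟩ := exists_unit_orth hinf u g
  have E : ∀ k, ∀ σ : ℝ, |σ| ≤ 1 →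
      ∃ x : H, ‖x‖ = 1 ∧ ⟪u k, x⟫ = σ * ‖u k‖ ∧ ⟪g k, x⟫ = σ * ‖g k‖ := by
    intro k
    apply exists_common w hw _ _ (hwu k) (hwg k)
    intro x hx
    have := F (NPair_single hN k) (fun _ => x) (fun _ => hx)
    simpa [Pi.single_apply] using this
  apply prop_of_nonneg
  intro σ τ hσ hτ
  obtain ⟨x, hx, hxu, hxg⟩ := E i σ hσ
  obtain ⟨y, hy, hyu, hyg⟩ := E j τ hτ
  have := F hab (fun k => if k = i then x else if k = j then y else w) (by
    intro k
    split_ifs <;> assumption)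
  have key : ∀ (c : Fin m → ℝ) (v : Fin m → H), (∀ k, ⟪v k, w⟫ = 0) →
      ∑ k, c k * ⟪v k, if k = i then x else if k = j then y else w⟫
        = c i * ⟪v i, x⟫ + c j * ⟪v j, y⟫ := by
    intro c v hv
    rw [Finset.sum_eq_add i j hij]
    · simp [hij.symm]
    · intro k _ hk
      simp [hk.1, hk.2, hv]
    · simp
    · simp
  rw [key _ _ hwg, key _ _ hwu, hxu, hxg, hyu, hyg] at this
  refine this.trans (le_of_eq ?_)
  ring

lemma exists_perm {m : ℕ} {i j k l : Fin m} (hij : i ≠ j) (hkl : k ≠ l) :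
    ∃ π : Equiv.Perm (Fin m), π i = k ∧ π j = l := by
  have h1 : Equiv.swap i k j ≠ k := by
    intro h
    apply hij
    apply (Equiv.swap i k).injective
    rw [h, Equiv.swap_apply_left]
  refine ⟨Equiv.swap (Equiv.swap i k j) l * Equiv.swap i k, ?_, ?_⟩
  · rw [Equiv.Perm.mul_apply, Equiv.swap_apply_left, Equiv.swap_apply_of_ne_of_ne h1.symm hkl]
  · rw [Equiv.Perm.mul_apply, Equiv.swap_apply_left]

theorem flinn_elements_supported_on_single_coordinate_of_infinite_dim
    {m : ℕ} (hm : 2 ≤ m) (N : (Fin m → ℝ) → ℝ)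
    (hN : IsSymmLatticeNorm N)
    (hN2 : ¬ ∃ c : ℝ, 0 < c ∧ ∀ x : Fin m → ℝ, N x = c * Real.sqrt (∑ i, x i ^ 2))
    {H : Type*} [NormedAddCommGroup H] [InnerProductSpace ℝ H] [CompleteSpace H]
    [TopologicalSpace.SeparableSpace H] (hinf : ¬ FiniteDimensional ℝ H)
    (u : Fin m → H) (hu : IsVFlinn N u) :
    ∃ i₀ : Fin m, ∀ i, i ≠ i₀ → u i = 0 := by
  obtain ⟨g, hug⟩ := hu
  by_contra hcon
  push Not at hcon
  obtain ⟨i₀, j₀, hij, hui, huj⟩ : ∃ i j, i ≠ j ∧ u i ≠ 0 ∧ u j ≠ 0 := by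
    obtain ⟨i, -, hi⟩ := hcon ⟨0, by omega⟩
    obtain ⟨j, hj, hj'⟩ := hcon i
    exact ⟨i, j, hj.symm, hi, hj'⟩
  have hqi : 0 < ‖u i₀‖ := norm_pos_iff.2 hui
  have hqj : 0 < ‖u j₀‖ := norm_pos_iff.2 huj
  have hone : ∀ i j, ‖g i‖ * ‖u j‖ = ‖g j‖ * ‖u i‖ := by
    intro i j
    by_cases h : i = j
    · rw [h]
    · simpa using flinn_prop hN.1 hinf u g hug (NPair_one hm hN) h
  obtain ⟨k, hk⟩ := Function.ne_iff.1 hug.1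
  have hpk : 0 < ‖g k‖ := norm_pos_iff.2 hk
  have hpi : 0 < ‖g i₀‖ := by
    refine lt_of_le_of_ne (norm_nonneg _) fun h => ?_
    have h2 := hone k i₀
    rw [← h, zero_mul] at h2
    exact (mul_pos hpk hqi).ne' h2
  have hpar : ∀ a b, NPair N a b → a i₀ * b j₀ = a j₀ * b i₀ := by
    intro a b hab
    have h1 := flinn_prop hN.1 hinf u g hug hab hij
    have h2 := hone i₀ j₀
    have h3 : (a i₀ * b j₀) * (‖g i₀‖ * ‖u j₀‖) = (a j₀ * b i₀) * (‖g i₀‖ * ‖u j₀‖) := by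
      calc _ = (a i₀ * ‖g i₀‖) * (b j₀ * ‖u j₀‖) := by ring
        _ = (a j₀ * b i₀) * (‖g j₀‖ * ‖u i₀‖) := by rw [h1]; ring
        _ = _ := by rw [h2]
    exact mul_right_cancel₀ (mul_pos hpi hqj).ne' h3
  have hpar' : ∀ a b, NPair N a b → ∀ k l, a k * b l = a l * b k := by
    intro a b hab k l
    by_cases hkl : k = l
    · rw [hkl]
    · obtain ⟨π, h1, h2⟩ := exists_perm hij hkl
      have := hpar _ _ (NPair_perm hN hab π)
      simpa [h1, h2] using this
  have hkey : ∀ a y : Fin m → ℝ, (∀ i, 0 ≤ a i) → (∀ i, 0 ≤ y i) → a ≠ 0 →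
      (∑ i, a i * y i) * N a ≤ N y * ∑ i, a i * a i := by
    intro a y ha hy ha0
    obtain ⟨b, hab, hpos⟩ := exists_NPair hN.1 a ha ha0
    have h1 := hab.2.2.2 y hy
    have h2 := hpar' a b hab
    have hA : 0 ≤ ∑ i, a i * a i := Finset.sum_nonneg fun i _ => mul_self_nonneg _
    have h3 : (∑ i, b i * y i) * (∑ i, a i * a i) = (∑ i, b i * a i) * (∑ i, a i * y i) := by
      rw [Finset.sum_mul_sum, Finset.sum_mul_sum, Finset.sum_comm]
      refine Finset.sum_congr rfl fun k _ => Finset.sum_congr rfl fun l _ => ?_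
      have := h2 k l
      linear_combination (y l * a k) * this
    refine le_of_mul_le_mul_left ?_ hpos
    calc (∑ i, b i * a i) * ((∑ i, a i * y i) * N a)
        = ((∑ i, b i * y i) * N a) * (∑ i, a i * a i) := by linear_combination -(N a) * h3
      _ ≤ (N y * ∑ i, b i * a i) * (∑ i, a i * a i) := mul_le_mul_of_nonneg_right h1 hA
      _ = _ := by ring
  have hone0 : (fun _ : Fin m => (1:ℝ)) ≠ 0 := (NPair_one hm hN).2.2.1
  have hN1 := N_pos hN.1 hone0
  have hm0 : (0:ℝ) < m := by exact_mod_cast (by omega : 0 < m)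
  apply hN2
  refine ⟨N (fun _ => 1) / Real.sqrt m, by positivity, ?_⟩
  intro x
  by_cases hx : x = 0
  · subst hx
    simp [(hN.1.1.1 0).2 rfl]
  have habs : (fun i => |x i|) ≠ 0 := by
    intro h
    apply hx
    funext i
    simpa using congrFun h i
  have hc := euclid_const hN.1 hkey (fun i => |x i|) (fun _ => 1) (fun i => abs_nonneg _)
    (fun _ => zero_le_one) habs hone0
  rw [← hN.1.2.1 x] at hc
  have hS : 0 < ∑ i, x i ^ 2 := by
    obtain ⟨i, hi⟩ := Function.ne_iff.1 hx
    exact Finset.sum_pos' (fun j _ => sq_nonneg _) ⟨i, Finset.mem_univ _, by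
      have : x i ≠ 0 := hi
      positivity⟩
  have e1 : ∑ i, |x i| * |x i| = ∑ i, x i ^ 2 :=
    Finset.sum_congr rfl fun i _ => by rw [abs_mul_abs_self, sq]
  rw [e1] at hc
  simp only [mul_one, Finset.sum_const, Finset.card_univ, Fintype.card_fin, nsmul_eq_mul] at hc
  rw [div_eq_iff hS.ne'] at hc
  have hNx := N_nonneg hN.1 x
  refine (sq_eq_sq₀ hNx (by positivity)).1 ?_
  rw [hc, mul_pow, div_pow, Real.sq_sqrt hm0.le, Real.sq_sqrt hS.le]
end

section
/- Let X and Y be real normed spaces and let U : X → Y be a surjective linear isometry. If (u, f) is a Flinn pair in X, then (U u, f ∘ U⁻¹) is a Flinn pair in Y. Consequently U maps the set of Flinn elements of X onto the set of Flinn elements of Y. -/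
/-- `(u, f)` is a Flinn pair in the real normed space `X`. -/
def IsFlinnPair {X : Type*} [NormedAddCommGroup X] [NormedSpace ℝ X]
    (u : X) (f : X →L[ℝ] ℝ) : Prop :=
  f ≠ 0 ∧ ∀ (x : X) (xs : X →L[ℝ] ℝ), xs x = ‖x‖ * ‖xs‖ → 0 ≤ f x * xs u

/-- `u` is a Flinn element of the real normed space `X`. -/
def IsFlinnElem {X : Type*} [NormedAddCommGroup X] [NormedSpace ℝ X] (u : X) : Prop :=
  ∃ f : X →L[ℝ] ℝ, IsFlinnPair u f

theorem IsFlinnPair.map_isometry_aux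
    {X Y : Type*} [NormedAddCommGroup X] [NormedSpace ℝ X]
    [NormedAddCommGroup Y] [NormedSpace ℝ Y]
    (U : X ≃ₗᵢ[ℝ] Y) (u : X) (f : X →L[ℝ] ℝ) (h : IsFlinnPair u f) :
    IsFlinnPair (U u) (f.comp U.symm.toLinearIsometry.toContinuousLinearMap) := by
  obtain ⟨hf, h⟩ := h
  refine ⟨fun h0 => hf ?_, fun y ys hy => ?_⟩
  · ext x
    have := congrArg (fun g : Y →L[ℝ] ℝ => g (U x)) h0
    simpa using this
  · have hn : ‖ys.comp (U.toContinuousLinearEquiv : X →L[ℝ] Y)‖ = ‖ys‖ :=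
      ContinuousLinearMap.opNorm_comp_linearIsometryEquiv ys U
    have := h (U.symm y) (ys.comp (U.toContinuousLinearEquiv : X →L[ℝ] Y))
      (by rw [hn]; simpa using hy)
    simpa using this

/-- A surjective linear isometry maps Flinn pairs to Flinn pairs and the set of Flinn
elements onto the set of Flinn elements. -/
theorem surjective_isometry_maps_flinn_pairs_and_elements
    {X Y : Type*} [NormedAddCommGroup X] [NormedSpace ℝ X]
    [NormedAddCommGroup Y] [NormedSpace ℝ Y]
    (U : X ≃ₗᵢ[ℝ] Y) :
    (∀ (u : X) (f : X →L[ℝ] ℝ), IsFlinnPair u f →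
      IsFlinnPair (U u) (f.comp U.symm.toLinearIsometry.toContinuousLinearMap)) ∧
    U '' {u : X | IsFlinnElem u} = {v : Y | IsFlinnElem v} := by
  refine ⟨IsFlinnPair.map_isometry_aux U, ?_⟩
  ext v
  constructor
  · rintro ⟨u, ⟨f, hf⟩, rfl⟩
    exact ⟨_, IsFlinnPair.map_isometry_aux U u f hf⟩
  · rintro ⟨g, hg⟩
    exact ⟨U.symm v, ⟨_, IsFlinnPair.map_isometry_aux U.symm v g hg⟩, by simp⟩
end
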